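/- Let f be convex and L-smooth on a convex set Ω of diameter D, x* a minimizer of f on Ω. For any x ∈ Ω and any d, x⁺ := x + γ(d − x) with γ ∈ [0,1] and d, x* ∈ Ω and d minimizing ⟨g, ·⟩ over Ω for some vector g. Then f(x⁺) − f(x*) ≤ (1−γ)(f(x) − f(x*)) + γ⟨∇f(x) − g, d − x*⟩ + LD²γ²/2. -/

import Mathlib

open scoped RealInnerProductSpace

theorem line_deriv_aux {n : ℕ} (f : EuclideanSpace ℝ (Fin n) → ℝ)
    (gf : EuclideanSpace ℝ (Fin n) → EuclideanSpace ℝ (Fin n))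
    (hgrad : ∀ x, HasGradientAt f (gf x) x) (x v : EuclideanSpace ℝ (Fin n)) (t : ℝ) :
    HasDerivAt (fun s : ℝ => f (x + s • v)) ⟪gf (x + t • v), v⟫ t := by
  have h1 : HasDerivAt (fun s : ℝ => x + s • v) v t := by
    simpa using ((hasDerivAt_id t).smul_const v).const_add x
  have h2 := (hgrad (x + t • v)).hasFDerivAt.comp_hasDerivAt t h1
  simpa [Function.comp_def] using h2

theorem descent_aux {n : ℕ} (L γ : ℝ) (hL : 0 < L) (hγ : 0 ≤ γ)
    (f : EuclideanSpace ℝ (Fin n) → ℝ)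
    (gf : EuclideanSpace ℝ (Fin n) → EuclideanSpace ℝ (Fin n))
    (hgrad : ∀ x, HasGradientAt f (gf x) x)
    (hLip : LipschitzWith (Real.toNNReal L) gf) (x v : EuclideanSpace ℝ (Fin n)) :
    f (x + γ • v) ≤ f x + γ * ⟪gf x, v⟫ + L * ‖v‖ ^ 2 * γ ^ 2 / 2 := by
  have hD : ∀ t : ℝ, HasDerivAt
      (fun s : ℝ => f (x + s • v) - (s * ⟪gf x, v⟫ + L * ‖v‖ ^ 2 / 2 * s ^ 2))
      (⟪gf (x + t • v), v⟫ - (⟪gf x, v⟫ + L * ‖v‖ ^ 2 * t)) t := by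
    intro t
    have h := (line_deriv_aux f gf hgrad x v t).sub
      (((hasDerivAt_id t).mul_const ⟪gf x, v⟫).add
        ((hasDerivAt_pow 2 t).const_mul (L * ‖v‖ ^ 2 / 2)))
    refine h.congr_deriv ?_
    push_cast
    ring
  have hanti := antitoneOn_of_deriv_nonpos (convex_Ici (0 : ℝ))
    (fun t _ => (hD t).continuousAt.continuousWithinAt)
    (fun t _ => (hD t).differentiableAt.differentiableWithinAt)
    (by
      intro t ht
      rw [interior_Ici] at ht
      have ht' : 0 < t := ht
      rw [(hD t).deriv]
      have h1 : ⟪gf (x + t • v) - gf x, v⟫ ≤ ‖gf (x + t • v) - gf x‖ * ‖v‖ :=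
        real_inner_le_norm _ _
      have h2 := hLip.norm_sub_le (x + t • v) x
      rw [Real.coe_toNNReal L hL.le, add_sub_cancel_left, norm_smul, Real.norm_eq_abs,
        abs_of_pos ht'] at h2
      have h3 := mul_le_mul_of_nonneg_right h2 (norm_nonneg v)
      rw [inner_sub_left] at h1
      nlinarith)
  have h := hanti (Set.mem_Ici.2 le_rfl) (Set.mem_Ici.2 hγ) hγ
  simp only [zero_smul, add_zero] at h
  nlinarith

theorem first_order_aux {n : ℕ} (f : EuclideanSpace ℝ (Fin n) → ℝ)
    (gf : EuclideanSpace ℝ (Fin n) → EuclideanSpace ℝ (Fin n))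
    (hconv : ConvexOn ℝ Set.univ f)
    (hgrad : ∀ x, HasGradientAt f (gf x) x) (x y : EuclideanSpace ℝ (Fin n)) :
    ⟪gf x, y - x⟫ ≤ f y - f x := by
  have hc : ConvexOn ℝ Set.univ (fun s : ℝ => f (x + s • (y - x))) := by
    have h := hconv.comp_affineMap (AffineMap.lineMap (k := ℝ) x y)
    simpa [Function.comp_def, AffineMap.lineMap_apply, add_comm] using h
  have h := hc.le_slope_of_hasDerivAt (Set.mem_univ 0) (Set.mem_univ 1) one_pos
    (line_deriv_aux f gf hgrad x (y - x) 0)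
  simpa [slope_def_field] using h

/-- One-step descent inequality for the (stochastic) Frank–Wolfe update:
if `x⁺ = x + γ(d − x)` with `d` minimizing `⟨g, ·⟩` over `Ω`, then
`f(x⁺) − f(x*) ≤ (1−γ)(f(x) − f(x*)) + γ⟨∇f(x) − g, d − x*⟩ + LD²γ²/2`. -/
theorem fw_one_step_descent
    {n : ℕ} (Ω : Set (EuclideanSpace ℝ (Fin n))) (hΩ : Convex ℝ Ω)
    (D L γ : ℝ) (hL : 0 < L)
    (hdiam : ∀ a ∈ Ω, ∀ b ∈ Ω, ‖a - b‖ ≤ D)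
    (f : EuclideanSpace ℝ (Fin n) → ℝ)
    (gf : EuclideanSpace ℝ (Fin n) → EuclideanSpace ℝ (Fin n))
    (hconv : ConvexOn ℝ Set.univ f)
    (hgrad : ∀ x, HasGradientAt f (gf x) x)
    (hLip : LipschitzWith (Real.toNNReal L) gf)
    (x dvec xs : EuclideanSpace ℝ (Fin n))
    (hx : x ∈ Ω) (hd : dvec ∈ Ω) (hxs : xs ∈ Ω)
    (g : EuclideanSpace ℝ (Fin n)) (hmin : ∀ y ∈ Ω, ⟪g, dvec⟫ ≤ ⟪g, y⟫)
    (hγ : γ ∈ Set.Icc (0 : ℝ) 1) :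
    f (x + γ • (dvec - x)) - f xs
      ≤ (1 - γ) * (f x - f xs) + γ * ⟪gf x - g, dvec - xs⟫ + L * D ^ 2 * γ ^ 2 / 2 := by
  have h1 := descent_aux L γ hL hγ.1 f gf hgrad hLip x (dvec - x)
  have h2 := first_order_aux f gf hconv hgrad x xs
  have h3 := hmin xs hxs
  have h4 : ‖dvec - x‖ ^ 2 ≤ D ^ 2 := pow_le_pow_left₀ (norm_nonneg _) (hdiam _ hd _ hx) 2
  have h5 : L * ‖dvec - x‖ ^ 2 * γ ^ 2 ≤ L * D ^ 2 * γ ^ 2 := by gcongr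
  have h6 : ⟪gf x, dvec - x⟫ ≤ ⟪gf x - g, dvec - xs⟫ + (f xs - f x) := by
    simp only [inner_sub_left, inner_sub_right] at *
    linarith
  have h7 := mul_le_mul_of_nonneg_left h6 hγ.1
  linarith
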